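/- Let Ω ⊆ ℝ^N be a G-invariant open set, where G is a closed subgroup of O(N) satisfying (G2) and σ : G → {1,−1} is a continuous surjective group homomorphism. Let Θ be the set of maps γ : [0,1] → Ḣ^s(Ω)^σ_G that are continuous with respect to the metric d(u,v) = ‖u−v‖ (Gagliardo seminorm) and satisfy γ(0) = 0, γ(1) not a.e. zero, and E(γ(1);Ω) ≤ 0. Then the mountain-pass value equals the Nehari value: inf_{γ∈Θ} sup_{t∈[0,1]} E(γ(t);Ω) = m(Ω)^σ_G. -/

import Mathlib

open MeasureTheory Real

noncomputable section

abbrev Euc (N : ℕ) := EuclideanSpace ℝ (Fin N)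

/-- The critical exponent `2*_s = 2N/(N-2s)`. -/
def twoStar (N : ℕ) (s : ℝ) : ℝ := 2 * N / (N - 2 * s)

/-- Square of the Gagliardo seminorm `‖u‖²`. -/
def gagSq (N : ℕ) (s : ℝ) (u : Euc N → ℝ) : ℝ :=
  ∫ p : Euc N × Euc N, (u p.1 - u p.2) ^ 2 / dist p.1 p.2 ^ ((N : ℝ) + 2 * s)

/-- The Gagliardo seminorm `‖u‖`. -/
def gagNorm (N : ℕ) (s : ℝ) (u : Euc N → ℝ) : ℝ := Real.sqrt (gagSq N s u)

/-- Finiteness of the Gagliardo seminorm (`‖u‖ < ∞`). -/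
def GagFinite (N : ℕ) (s : ℝ) (u : Euc N → ℝ) : Prop :=
  Integrable (fun p : Euc N × Euc N => (u p.1 - u p.2) ^ 2 / dist p.1 p.2 ^ ((N : ℝ) + 2 * s))

/-- Membership in `Ḣ^s(Ω)`: measurable, in `L^{2*_s}(ℝ^N)`, finite Gagliardo seminorm,
and vanishing a.e. outside `Ω`. -/
structure MemHs (N : ℕ) (s : ℝ) (Ω : Set (Euc N)) (u : Euc N → ℝ) : Prop where
  meas : Measurable u
  lp : Integrable fun x : Euc N => |u x| ^ twoStar N s
  fin : GagFinite N s u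
  vanish : ∀ᵐ x : Euc N, x ∉ Ω → u x = 0

/-- The energy functional `E(u;Ω)`. -/
def energy (N : ℕ) (s : ℝ) (Ω : Set (Euc N)) (u : Euc N → ℝ) : ℝ :=
  (1 / 2) * gagSq N s u - (1 / twoStar N s) * ∫ x in Ω, |u x| ^ twoStar N s

/-- The Nehari functional `N(u;Ω)`. -/
def nehariFun (N : ℕ) (s : ℝ) (Ω : Set (Euc N)) (u : Euc N → ℝ) : ℝ :=
  gagSq N s u - ∫ x in Ω, |u x| ^ twoStar N s

/-- The pairing `⟨E'(u), v⟩` (with domain `Ω`). -/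
def pairing (N : ℕ) (s : ℝ) (Ω : Set (Euc N)) (u v : Euc N → ℝ) : ℝ :=
  (∫ p : Euc N × Euc N, (u p.1 - u p.2) * (v p.1 - v p.2) / dist p.1 p.2 ^ ((N : ℝ) + 2 * s))
    - ∫ x in Ω, |u x| ^ (twoStar N s - 2) * u x * v x

/-- The sharp fractional Sobolev constant `S(N,s)`. -/
def sobolevS (N : ℕ) (s : ℝ) : ℝ :=
  (2 : ℝ) ^ (-(2 * s)) * Real.pi ^ (-s) *
    (Real.Gamma ((N - 2 * s) / 2) / Real.Gamma ((N + 2 * s) / 2)) *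
    (Real.Gamma N / Real.Gamma (N / 2)) ^ (2 * s / N)

/-- The orthogonal group `O(N)`. -/
abbrev ONgrp (N : ℕ) := Matrix.orthogonalGroup (Fin N) ℝ

/-- The linear action of `O(N)` on `ℝ^N`. -/
def ogAct {N : ℕ} (g : ONgrp N) (x : Euc N) : Euc N :=
  Matrix.toEuclideanLin (g : Matrix (Fin N) (Fin N) ℝ) x

/-- `σ`-equivariance of `u : ℝ^N → ℝ` under a subgroup `G` of `O(N)`:
`u (g x) = σ(g) u (x)` for all `g ∈ G`, `x ∈ ℝ^N`. -/
def IsEquivariant {N : ℕ} (G : Subgroup (ONgrp N)) (σ : G →* ℤˣ) (u : Euc N → ℝ) : Prop :=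
  ∀ g : G, ∀ x : Euc N, u (ogAct (g : ONgrp N) x) = ((σ g : ℤ) : ℝ) * u x

/-- `G`-invariance of a set. -/
def IsInvariantSet {N : ℕ} (G : Subgroup (ONgrp N)) (Ω : Set (Euc N)) : Prop :=
  ∀ g : G, ∀ x ∈ Ω, ogAct (g : ONgrp N) x ∈ Ω

/-- Condition (G1): every `G`-orbit is infinite or a single point. -/
def CondG1 {N : ℕ} (G : Subgroup (ONgrp N)) : Prop :=
  ∀ x : Euc N, ({y : Euc N | ∃ g : G, ogAct (g : ONgrp N) x = y}).Infinite ∨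
    ∀ g : G, ogAct (g : ONgrp N) x = x

/-- Condition (G2): there is a point `ξ` with `σ = 1` on the stabilizer of `ξ`. -/
def CondG2 {N : ℕ} (G : Subgroup (ONgrp N)) (σ : G →* ℤˣ) : Prop :=
  ∃ ξ : Euc N, ∀ g : G, ogAct (g : ONgrp N) ξ = ξ → σ g = 1

/-- The Nehari level `m(Ω)^σ_G = inf { E(u;Ω) : u ∈ N(Ω)^σ_G }`. -/
def mval (N : ℕ) (s : ℝ) (Ω : Set (Euc N)) (G : Subgroup (ONgrp N)) (σ : G →* ℤˣ) : ℝ :=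
  sInf {c : ℝ | ∃ u : Euc N → ℝ, MemHs N s Ω u ∧ IsEquivariant G σ u ∧
    ¬ (∀ᵐ x : Euc N, u x = 0) ∧ nehariFun N s Ω u = 0 ∧ c = energy N s Ω u}

theorem two_lt_twoStar {N : ℕ} {s : ℝ} (hs0 : 0 < s) (hsN : 2 * s < N) : 2 < twoStar N s := by
  rw [twoStar, lt_div_iff₀ (by linarith)]
  linarith

/-- The integrand of the squared Gagliardo seminorm. -/
def gagKer (N : ℕ) (s : ℝ) (u : Euc N → ℝ) (p : Euc N × Euc N) : ℝ :=
  (u p.1 - u p.2) ^ 2 / dist p.1 p.2 ^ ((N : ℝ) + 2 * s)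

theorem gagKer_nonneg (N : ℕ) (s : ℝ) (u : Euc N → ℝ) (p : Euc N × Euc N) :
    0 ≤ gagKer N s u p := by
  unfold gagKer; positivity

theorem gagSq_nonneg (N : ℕ) (s : ℝ) (u : Euc N → ℝ) : 0 ≤ gagSq N s u :=
  integral_nonneg (gagKer_nonneg N s u)

/-- A point of a ball around `x` either has large `|u|` or contributes to the kernel at `x`. -/
theorem indicator_ball_le {N : ℕ} {s p r : ℝ} (hs0 : 0 < s) (hp : 0 < p) (hr : 0 < r)
    {u : Euc N → ℝ} {x : Euc N} (hx : u x ≠ 0) (y : Euc N) :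
    (Metric.ball x r).indicator (fun _ => (1 : ℝ)) y ≤
      2 ^ p / |u x| ^ p * |u y| ^ p +
        4 / |u x| ^ 2 * r ^ ((N : ℝ) + 2 * s) * gagKer N s u (x, y) := by
  have ht : 0 < |u x| := abs_pos.2 hx
  by_cases hy : y ∈ Metric.ball x r
  · rw [Set.indicator_of_mem hy]
    have h2 : 0 ≤ 4 / |u x| ^ 2 * r ^ ((N : ℝ) + 2 * s) * gagKer N s u (x, y) :=
      mul_nonneg (by positivity) (gagKer_nonneg _ _ _ _)
    by_cases hc : |u x| ≤ 2 * |u y|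
    · have : |u x| ^ p ≤ 2 ^ p * |u y| ^ p := by
        rw [← Real.mul_rpow (by norm_num) (abs_nonneg _)]
        exact Real.rpow_le_rpow ht.le hc hp.le
      have : 1 ≤ 2 ^ p / |u x| ^ p * |u y| ^ p := by
        rw [div_mul_eq_mul_div, one_le_div (by positivity)]
        exact this
      linarith
    · have h1 : 0 ≤ 2 ^ p / |u x| ^ p * |u y| ^ p := by positivity
      have hxy : x ≠ y := by
        rintro rfl
        exact hc (by linarith)
      have hd : 0 < dist x y := dist_pos.2 hxy
      have hdr : dist x y ≤ r := by
        rw [dist_comm]; exact (Metric.mem_ball.1 hy).le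
      have hab : |u x| ≤ 2 * |u x - u y| := by
        have := abs_sub_abs_le_abs_sub (u x) (u y)
        linarith
      have hsq : |u x| ^ 2 ≤ 4 * (u x - u y) ^ 2 := by
        rw [← sq_abs (u x - u y)]
        nlinarith
      have hrd : dist x y ^ ((N : ℝ) + 2 * s) ≤ r ^ ((N : ℝ) + 2 * s) :=
        Real.rpow_le_rpow hd.le hdr (by positivity)
      have : 1 ≤ 4 / |u x| ^ 2 * r ^ ((N : ℝ) + 2 * s) * gagKer N s u (x, y) := by
        have hdp : 0 < dist x y ^ ((N : ℝ) + 2 * s) := by positivity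
        have he : 4 / |u x| ^ 2 * r ^ ((N : ℝ) + 2 * s) * gagKer N s u (x, y) =
            (4 * (u x - u y) ^ 2 * r ^ ((N : ℝ) + 2 * s)) /
              (|u x| ^ 2 * dist x y ^ ((N : ℝ) + 2 * s)) := by
          simp only [gagKer]
          field_simp
        rw [he, one_le_div (by positivity)]
        gcongr
      linarith
  · rw [Set.indicator_of_notMem hy]
    exact add_nonneg (by positivity) (mul_nonneg (by positivity) (gagKer_nonneg _ _ _ _))

theorem volume_ball_le {N : ℕ} {s p r : ℝ} (hs0 : 0 < s) (hp : 0 < p) (hr : 0 < r)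
    {u : Euc N → ℝ} {x : Euc N} (hx : u x ≠ 0)
    (hu : Integrable fun y : Euc N => |u y| ^ p)
    (hk : Integrable fun y : Euc N => gagKer N s u (x, y)) :
    volume.real (Metric.ball (0 : Euc N) 1) * r ^ (N : ℝ) ≤
      2 ^ p / |u x| ^ p * (∫ y, |u y| ^ p) +
        4 / |u x| ^ 2 * r ^ ((N : ℝ) + 2 * s) * ∫ y, gagKer N s u (x, y) := by
  have hball : volume.real (Metric.ball (0 : Euc N) 1) * r ^ (N : ℝ) =
      volume.real (Metric.ball x r) := by
    rw [Measure.real, Measure.real, Measure.addHaar_ball_of_pos _ _ hr, ENNReal.toReal_mul,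
      ENNReal.toReal_ofReal (by positivity), finrank_euclideanSpace_fin, Real.rpow_natCast,
      mul_comm]
  rw [hball, ← integral_const_mul, ← integral_const_mul,
    ← integral_add (hu.const_mul _) (hk.const_mul _),
    ← integral_indicator_one measurableSet_ball]
  refine integral_mono ?_ ((hu.const_mul _).add (hk.const_mul _))
    (indicator_ball_le hs0 hp hr hx)
  exact (integrable_indicator_iff measurableSet_ball).2
    (integrableOn_const measure_ball_lt_top.ne)

/-- Pointwise form of the fractional Sobolev inequality. -/
theorem rpow_twoStar_le {N : ℕ} {s : ℝ} (hs0 : 0 < s) (hsN : 2 * s < N)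
    {u : Euc N → ℝ} {x : Euc N}
    (hu : Integrable fun y : Euc N => |u y| ^ twoStar N s)
    (hA : 0 < ∫ y, |u y| ^ twoStar N s)
    (hk : Integrable fun y : Euc N => gagKer N s u (x, y)) :
    |u x| ^ twoStar N s ≤
      8 / volume.real (Metric.ball (0 : Euc N) 1) *
        (2 ^ (twoStar N s + 1) / volume.real (Metric.ball (0 : Euc N) 1)) ^ (2 * s / N) *
        (∫ y, |u y| ^ twoStar N s) ^ (2 * s / N) * ∫ y, gagKer N s u (x, y) := by
  have hω : 0 < volume.real (Metric.ball (0 : Euc N) 1) :=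
    ENNReal.toReal_pos (Metric.measure_ball_pos _ _ one_pos).ne' measure_ball_lt_top.ne
  have hp2 := two_lt_twoStar hs0 hsN
  have hD : 0 ≤ ∫ y, gagKer N s u (x, y) := integral_nonneg fun y => gagKer_nonneg _ _ _ _
  have hNpos : (0 : ℝ) < N := by linarith
  have hexp : twoStar N s = 2 + twoStar N s * (2 * s / N) := by
    have : (N : ℝ) - 2 * s ≠ 0 := by linarith
    rw [twoStar]
    field_simp
    ring
  generalize hωd : volume.real (Metric.ball (0 : Euc N) 1) = ω at *
  generalize hpd : twoStar N s = p at *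
  generalize hDd : ∫ y, gagKer N s u (x, y) = D at *
  generalize hAd : ∫ y, |u y| ^ p = A at *
  by_cases hx : u x = 0
  · rw [hx, abs_zero, Real.zero_rpow (by linarith)]
    positivity
  have ht : 0 < |u x| := abs_pos.2 hx
  have hQ : 0 < 2 ^ (p + 1) / ω * A / |u x| ^ p := by positivity
  have key := volume_ball_le (r := (2 ^ (p + 1) / ω * A / |u x| ^ p) ^ (1 / (N : ℝ)))
    hs0 (by linarith) (by positivity) hx hu hk
  rw [hωd, hAd, hDd, ← Real.rpow_mul hQ.le, ← Real.rpow_mul hQ.le,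
    one_div_mul_cancel hNpos.ne', Real.rpow_one, one_div, inv_mul_eq_div, add_div,
    div_self hNpos.ne', Real.rpow_add hQ, Real.rpow_one] at key
  have h1 : 2 ^ p / |u x| ^ p * A = ω * (2 ^ (p + 1) / ω * A / |u x| ^ p) / 2 := by
    rw [Real.rpow_add two_pos, Real.rpow_one]
    field_simp
  rw [h1] at key
  have hsplit : (2 ^ (p + 1) / ω * A / |u x| ^ p) ^ (2 * s / N) =
      (2 ^ (p + 1) / ω) ^ (2 * s / N) * A ^ (2 * s / N) / |u x| ^ (p * (2 * s / N)) := by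
    rw [Real.div_rpow (by positivity) (by positivity), Real.mul_rpow (by positivity) hA.le,
      ← Real.rpow_mul ht.le]
  generalize 2 ^ (p + 1) / ω * A / |u x| ^ p = Q at *
  have h2 : ω * |u x| ^ 2 ≤ 8 * (Q ^ (2 * s / N) * D) := by
    have h3 : ω * Q ≤ 8 / |u x| ^ 2 * (Q ^ (2 * s / N) * D) * Q := by
      have : 8 / |u x| ^ 2 * (Q ^ (2 * s / N) * D) * Q =
        2 * (4 / |u x| ^ 2 * (Q * Q ^ (2 * s / N)) * D) := by ring
      rw [this]; linarith
    have h4 := le_of_mul_le_mul_right h3 hQ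
    rw [div_mul_eq_mul_div, le_div_iff₀ (by positivity)] at h4
    exact h4
  rw [hsplit] at h2
  rw [hexp, Real.rpow_add ht, Real.rpow_two, ← hexp]
  have h5 : |u x| ^ 2 ≤ 8 / ω * ((2 ^ (p + 1) / ω) ^ (2 * s / N) * A ^ (2 * s / N) /
      |u x| ^ (p * (2 * s / N)) * D) := by
    rw [div_mul_eq_mul_div, le_div_iff₀ hω]; linarith
  have h6 : 0 < |u x| ^ (p * (2 * s / N)) := by positivity
  calc |u x| ^ 2 * |u x| ^ (p * (2 * s / N)) ≤ _ := mul_le_mul_of_nonneg_right h5 h6.le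
    _ = _ := by field_simp

/-- The fractional Sobolev inequality. -/
theorem exists_sobolev_const {N : ℕ} {s : ℝ} (hs0 : 0 < s) (hsN : 2 * s < N) :
    ∃ C : ℝ, 0 < C ∧ ∀ u : Euc N → ℝ, (Integrable fun y : Euc N => |u y| ^ twoStar N s) →
      GagFinite N s u →
        ∫ y, |u y| ^ twoStar N s ≤ (C * gagSq N s u) ^ (twoStar N s / 2) := by
  have hω : 0 < volume.real (Metric.ball (0 : Euc N) 1) :=
    ENNReal.toReal_pos (Metric.measure_ball_pos _ _ one_pos).ne' measure_ball_lt_top.ne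
  have hNpos : (0 : ℝ) < N := by linarith
  refine ⟨8 / volume.real (Metric.ball (0 : Euc N) 1) *
    (2 ^ (twoStar N s + 1) / volume.real (Metric.ball (0 : Euc N) 1)) ^ (2 * s / N),
    by positivity, fun u hu hfin => ?_⟩
  have hgag := gagSq_nonneg N s u
  have hA0 : 0 ≤ ∫ y, |u y| ^ twoStar N s := integral_nonneg fun y => by positivity
  rcases hA0.eq_or_lt with hA | hA
  · rw [← hA]
    positivity
  have hfin' : Integrable (gagKer N s u) (volume.prod volume) := hfin
  have hint := integral_mono_ae hu (hfin'.integral_prod_left.const_mul _)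
    (hfin'.prod_right_ae.mono fun x hx => rpow_twoStar_le hs0 hsN hu hA hx)
  rw [integral_const_mul, ← integral_prod _ hfin'] at hint
  change _ ≤ _ * gagSq N s u at hint
  generalize 8 / volume.real (Metric.ball (0 : Euc N) 1) *
    (2 ^ (twoStar N s + 1) / volume.real (Metric.ball (0 : Euc N) 1)) ^ (2 * s / N) = C at *
  generalize hAd : ∫ y, |u y| ^ twoStar N s = A at *
  have h1 : A ^ (1 - 2 * s / N) ≤ C * gagSq N s u := by
    rw [Real.rpow_sub hA, Real.rpow_one, div_le_iff₀ (by positivity)]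
    linarith
  have h2 := Real.rpow_le_rpow (by positivity) h1
    (by linarith [two_lt_twoStar hs0 hsN] : 0 ≤ twoStar N s / 2)
  rw [← Real.rpow_mul hA.le] at h2
  have h3 : (1 - 2 * s / N) * (twoStar N s / 2) = 1 := by
    have : (N : ℝ) - 2 * s ≠ 0 := by linarith
    rw [twoStar]
    field_simp
  rwa [h3, Real.rpow_one] at h2

theorem abs_lpNorm_sub_lpNorm_le {α : Type*} {m : MeasurableSpace α} {μ : Measure α}
    {p : ENNReal} {f g : α → ℝ} (hf : MemLp f p μ) (hg : MemLp g p μ) (hp : 1 ≤ p) :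
    |lpNorm f p μ - lpNorm g p μ| ≤ lpNorm (f - g) p μ := by
  have h1 := lpNorm_le_lpNorm_add_lpNorm_sub (f := f) hg hp
  have h2 := lpNorm_le_lpNorm_add_lpNorm_sub (f := g) hf hp
  rw [lpNorm_sub_comm] at h1
  exact abs_le.2 ⟨by linarith, by linarith⟩

/-- The weighted difference quotient whose `L²` norm is the Gagliardo seminorm. -/
def diffQuot (N : ℕ) (s : ℝ) (u : Euc N → ℝ) (p : Euc N × Euc N) : ℝ :=
  (u p.1 - u p.2) / dist p.1 p.2 ^ (((N : ℝ) + 2 * s) / 2)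

theorem diffQuot_sq (N : ℕ) (s : ℝ) (u : Euc N → ℝ) (p : Euc N × Euc N) :
    diffQuot N s u p ^ 2 =
      (u p.1 - u p.2) ^ 2 / dist p.1 p.2 ^ ((N : ℝ) + 2 * s) := by
  rw [diffQuot, div_pow, ← Real.rpow_natCast (dist _ _ ^ _), ← Real.rpow_mul dist_nonneg]
  norm_num

theorem measurable_diffQuot {N : ℕ} (s : ℝ) {u : Euc N → ℝ} (hu : Measurable u) :
    Measurable (diffQuot N s u) := by
  unfold diffQuot
  have : Measurable fun p : Euc N × Euc N => dist p.1 p.2 := measurable_dist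
  exact ((hu.comp measurable_fst).sub (hu.comp measurable_snd)).div (this.pow_const _)

theorem diffQuot_sub (N : ℕ) (s : ℝ) (u v : Euc N → ℝ) :
    diffQuot N s (fun x => u x - v x) = diffQuot N s u - diffQuot N s v := by
  ext p
  simp only [diffQuot, Pi.sub_apply]
  ring

theorem gagFinite_iff_memLp {N : ℕ} {s : ℝ} {u : Euc N → ℝ} (hu : Measurable u) :
    GagFinite N s u ↔ MemLp (diffQuot N s u) 2 := by
  rw [memLp_two_iff_integrable_sq (measurable_diffQuot s hu).aestronglyMeasurable]
  simp_rw [diffQuot_sq]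
  rfl

theorem gagNorm_eq_lpNorm {N : ℕ} {s : ℝ} {u : Euc N → ℝ} (hu : Measurable u) :
    gagNorm N s u = lpNorm (diffQuot N s u) 2 volume := by
  rw [lpNorm_eq_integral_norm_rpow_toReal (by norm_num) (by norm_num)
    (measurable_diffQuot s hu).aestronglyMeasurable, gagNorm, Real.sqrt_eq_rpow, gagSq]
  simp [diffQuot_sq]

theorem gagNorm_sq (N : ℕ) (s : ℝ) (u : Euc N → ℝ) : gagNorm N s u ^ 2 = gagSq N s u :=
  Real.sq_sqrt (gagSq_nonneg N s u)

theorem gagNorm_nonneg (N : ℕ) (s : ℝ) (u : Euc N → ℝ) : 0 ≤ gagNorm N s u :=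
  Real.sqrt_nonneg _

theorem gagSq_const_mul (N : ℕ) (s c : ℝ) (u : Euc N → ℝ) :
    gagSq N s (fun x => c * u x) = c ^ 2 * gagSq N s u := by
  rw [gagSq, gagSq, ← integral_const_mul]
  congr 1 with p
  ring

theorem gagNorm_const_mul (N : ℕ) (s c : ℝ) (u : Euc N → ℝ) :
    gagNorm N s (fun x => c * u x) = |c| * gagNorm N s u := by
  rw [gagNorm, gagSq_const_mul, Real.sqrt_mul (sq_nonneg c), Real.sqrt_sq_eq_abs, gagNorm]

/-- The critical integral `∫ |u|^{2*_s}` over the whole space. -/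
def critInt (N : ℕ) (s : ℝ) (u : Euc N → ℝ) : ℝ := ∫ x : Euc N, |u x| ^ twoStar N s

theorem critInt_nonneg (N : ℕ) (s : ℝ) (u : Euc N → ℝ) : 0 ≤ critInt N s u :=
  integral_nonneg fun x => by positivity

theorem one_le_ofReal_twoStar {N : ℕ} {s : ℝ} (hp : 2 < twoStar N s) :
    1 ≤ ENNReal.ofReal (twoStar N s) := by
  rw [← ENNReal.ofReal_one]
  exact ENNReal.ofReal_le_ofReal (by linarith)

theorem integrable_rpow_iff_memLp {N : ℕ} {s : ℝ} (hp : 2 < twoStar N s) {u : Euc N → ℝ}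
    (hu : Measurable u) :
    (Integrable fun x : Euc N => |u x| ^ twoStar N s) ↔
      MemLp u (ENNReal.ofReal (twoStar N s)) := by
  have h0 : ENNReal.ofReal (twoStar N s) ≠ 0 := (ENNReal.ofReal_pos.2 (by linarith)).ne'
  rw [← integrable_norm_rpow_iff hu.aestronglyMeasurable h0 ENNReal.ofReal_ne_top,
    ENNReal.toReal_ofReal (by linarith)]
  rfl

theorem critInt_eq_lpNorm_rpow {N : ℕ} {s : ℝ} (hp : 2 < twoStar N s) {u : Euc N → ℝ}
    (hu : Measurable u) :
    critInt N s u = lpNorm u (ENNReal.ofReal (twoStar N s)) volume ^ twoStar N s := by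
  have h0 : ENNReal.ofReal (twoStar N s) ≠ 0 := (ENNReal.ofReal_pos.2 (by linarith)).ne'
  rw [lpNorm_eq_integral_norm_rpow_toReal h0 ENNReal.ofReal_ne_top hu.aestronglyMeasurable,
    ENNReal.toReal_ofReal (by linarith), Real.rpow_inv_rpow (integral_nonneg fun x => by positivity) (by linarith)]
  rfl

theorem MemHs.sub {N : ℕ} {s : ℝ} (hp : 2 < twoStar N s)
    {u v : Euc N → ℝ} {Ω : Set (Euc N)} (hu : MemHs N s Ω u) (hv : MemHs N s Ω v) :
    MemHs N s Ω (fun x => u x - v x) where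
  meas := hu.meas.sub hv.meas
  lp := (integrable_rpow_iff_memLp hp (hu.meas.sub hv.meas)).2
    (((integrable_rpow_iff_memLp hp hu.meas).1 hu.lp).sub
      ((integrable_rpow_iff_memLp hp hv.meas).1 hv.lp))
  fin := by
    refine (gagFinite_iff_memLp (hu.meas.sub hv.meas)).2 ?_
    change MemLp (diffQuot N s fun x => u x - v x) 2
    rw [diffQuot_sub]
    exact ((gagFinite_iff_memLp hu.meas).1 hu.fin).sub ((gagFinite_iff_memLp hv.meas).1 hv.fin)
  vanish := by
    filter_upwards [hu.vanish, hv.vanish] with x h1 h2 hx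
    rw [h1 hx, h2 hx, sub_zero]

theorem MemHs.setIntegral_eq {N : ℕ} {s : ℝ} (hp : 2 < twoStar N s)
    {u : Euc N → ℝ} {Ω : Set (Euc N)} (hu : MemHs N s Ω u) :
    ∫ x in Ω, |u x| ^ twoStar N s = critInt N s u :=
  setIntegral_eq_integral_of_ae_compl_eq_zero <| by
    filter_upwards [hu.vanish] with x h hx
    rw [h hx, abs_zero, Real.zero_rpow (by linarith)]

theorem MemHs.critInt_eq_zero_iff {N : ℕ} {s : ℝ} (hp : 2 < twoStar N s)
    {u : Euc N → ℝ} {Ω : Set (Euc N)} (hu : MemHs N s Ω u) :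
    critInt N s u = 0 ↔ ∀ᵐ x : Euc N, u x = 0 := by
  rw [critInt, integral_eq_zero_iff_of_nonneg (fun x => by positivity) hu.lp]
  refine Filter.eventually_congr (.of_forall fun x => ?_)
  rw [Pi.zero_apply, Real.rpow_eq_zero (abs_nonneg _) (by linarith), abs_eq_zero]

theorem critInt_const_mul (N : ℕ) (s : ℝ) {c : ℝ} (hc : 0 ≤ c) (u : Euc N → ℝ) :
    critInt N s (fun x => c * u x) = c ^ twoStar N s * critInt N s u := by
  rw [critInt, critInt, ← integral_const_mul]
  congr 1 with x
  rw [abs_mul, abs_of_nonneg hc, Real.mul_rpow hc (abs_nonneg _)]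

theorem MemHs.const_mul {N : ℕ} {s : ℝ} {Ω : Set (Euc N)} {u : Euc N → ℝ}
    (hu : MemHs N s Ω u) (c : ℝ) : MemHs N s Ω (fun x => c * u x) where
  meas := hu.meas.const_mul c
  lp := by
    refine (hu.lp.const_mul (|c| ^ twoStar N s)).congr (.of_forall fun x => ?_)
    simp only [abs_mul]
    rw [Real.mul_rpow (abs_nonneg _) (abs_nonneg _)]
  fin := by
    refine (Integrable.const_mul hu.fin (c ^ 2)).congr (.of_forall fun p => ?_)
    simp only
    ring
  vanish := by
    filter_upwards [hu.vanish] with x h hx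
    rw [h hx, mul_zero]

theorem IsEquivariant.const_mul {N : ℕ} {G : Subgroup (ONgrp N)} {σ : G →* ℤˣ}
    {u : Euc N → ℝ} (hu : IsEquivariant G σ u) (c : ℝ) :
    IsEquivariant G σ (fun x => c * u x) := fun g x => by
  simp only [hu g x]
  ring

theorem abs_gagNorm_sub_le {N : ℕ} {s : ℝ} {Ω : Set (Euc N)} {u v : Euc N → ℝ}
    (hu : MemHs N s Ω u) (hv : MemHs N s Ω v) :
    |gagNorm N s u - gagNorm N s v| ≤ gagNorm N s (fun x => u x - v x) := by
  rw [gagNorm_eq_lpNorm hu.meas, gagNorm_eq_lpNorm hv.meas,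
    gagNorm_eq_lpNorm (u := fun x => u x - v x) (hu.meas.sub hv.meas), diffQuot_sub]
  exact abs_lpNorm_sub_lpNorm_le ((gagFinite_iff_memLp hu.meas).1 hu.fin)
    ((gagFinite_iff_memLp hv.meas).1 hv.fin) (by norm_num)

/-- The Sobolev embedding of `Ḣ^s` into `L^{2*_s}` in terms of norms. -/
theorem exists_lpNorm_le_gagNorm {N : ℕ} {s : ℝ} (hs0 : 0 < s) (hsN : 2 * s < N) :
    ∃ K : ℝ, 0 < K ∧ ∀ (Ω : Set (Euc N)) (u : Euc N → ℝ), MemHs N s Ω u →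
      lpNorm u (ENNReal.ofReal (twoStar N s)) volume ≤ K * gagNorm N s u := by
  obtain ⟨C, hC, h⟩ := exists_sobolev_const (N := N) hs0 hsN
  have hp := two_lt_twoStar hs0 hsN
  refine ⟨√C, Real.sqrt_pos.2 hC, fun Ω u hu => ?_⟩
  have h1 := h u hu.lp hu.fin
  have hg := gagNorm_nonneg N s u
  rw [← critInt, critInt_eq_lpNorm_rpow hp hu.meas, ← gagNorm_sq,
    show C * gagNorm N s u ^ 2 = (√C * gagNorm N s u) ^ (2 : ℝ) by
      rw [Real.rpow_two, mul_pow, Real.sq_sqrt hC.le],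
    ← Real.rpow_mul (by positivity), mul_div_cancel₀ _ two_ne_zero] at h1
  exact (Real.rpow_le_rpow_iff lpNorm_nonneg (by positivity) (by linarith)).1 h1

theorem continuousOn_of_abs_sub_le {N : ℕ} {s K : ℝ} (hK : 0 < K) {I : Set ℝ}
    {γ : ℝ → Euc N → ℝ} {F : ℝ → ℝ}
    (hγ : ∀ t ∈ I, ∀ ε > (0 : ℝ), ∃ δ > (0 : ℝ), ∀ t' ∈ I,
      |t' - t| < δ → gagNorm N s (fun x => γ t' x - γ t x) < ε)
    (hF : ∀ t ∈ I, ∀ t' ∈ I, |F t' - F t| ≤ K * gagNorm N s (fun x => γ t' x - γ t x)) :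
    ContinuousOn F I := by
  rw [Metric.continuousOn_iff]
  intro t ht ε hε
  obtain ⟨δ, hδ, h⟩ := hγ t ht (ε / K) (by positivity)
  refine ⟨δ, hδ, fun t' ht' hd => ?_⟩
  rw [Real.dist_eq] at hd ⊢
  have := (lt_div_iff₀ hK).1 (h t' ht' hd)
  linarith [hF t ht t' ht']

theorem continuousOn_gagSq {N : ℕ} {s : ℝ} {Ω : Set (Euc N)} {I : Set ℝ}
    {γ : ℝ → Euc N → ℝ} (hmem : ∀ t ∈ I, MemHs N s Ω (γ t))
    (hγ : ∀ t ∈ I, ∀ ε > (0 : ℝ), ∃ δ > (0 : ℝ), ∀ t' ∈ I,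
      |t' - t| < δ → gagNorm N s (fun x => γ t' x - γ t x) < ε) :
    ContinuousOn (fun t => gagSq N s (γ t)) I := by
  simp_rw [← gagNorm_sq]
  refine ContinuousOn.pow (continuousOn_of_abs_sub_le one_pos hγ fun t ht t' ht' => ?_) 2
  rw [one_mul]
  exact abs_gagNorm_sub_le (hmem t' ht') (hmem t ht)

theorem continuousOn_critInt {N : ℕ} {s : ℝ} (hs0 : 0 < s) (hsN : 2 * s < N)
    {Ω : Set (Euc N)} {I : Set ℝ}
    {γ : ℝ → Euc N → ℝ} (hmem : ∀ t ∈ I, MemHs N s Ω (γ t))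
    (hγ : ∀ t ∈ I, ∀ ε > (0 : ℝ), ∃ δ > (0 : ℝ), ∀ t' ∈ I,
      |t' - t| < δ → gagNorm N s (fun x => γ t' x - γ t x) < ε) :
    ContinuousOn (fun t => critInt N s (γ t)) I := by
  have hp := two_lt_twoStar hs0 hsN
  obtain ⟨K, hK, hS⟩ := exists_lpNorm_le_gagNorm (N := N) hs0 hsN
  refine ContinuousOn.congr (f := fun t =>
      lpNorm (γ t) (ENNReal.ofReal (twoStar N s)) volume ^ twoStar N s) ?_
    fun t ht => critInt_eq_lpNorm_rpow hp (hmem t ht).meas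
  refine (continuousOn_of_abs_sub_le hK hγ fun t ht t' ht' => ?_).rpow_const
    fun _ _ => Or.inr (by linarith)
  exact (abs_lpNorm_sub_lpNorm_le ((integrable_rpow_iff_memLp hp (hmem t' ht').meas).1
    (hmem t' ht').lp) ((integrable_rpow_iff_memLp hp (hmem t ht).meas).1 (hmem t ht).lp)
    (one_le_ofReal_twoStar hp)).trans (hS Ω _ (MemHs.sub hp (hmem t' ht') (hmem t ht)))

theorem MemHs.energy_eq {N : ℕ} {s : ℝ} (hp : 2 < twoStar N s) {Ω : Set (Euc N)}
    {u : Euc N → ℝ} (hu : MemHs N s Ω u) :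
    energy N s Ω u = 1 / 2 * gagSq N s u - 1 / twoStar N s * critInt N s u := by
  rw [energy, MemHs.setIntegral_eq hp hu]

theorem MemHs.nehariFun_eq {N : ℕ} {s : ℝ} (hp : 2 < twoStar N s) {Ω : Set (Euc N)}
    {u : Euc N → ℝ} (hu : MemHs N s Ω u) :
    nehariFun N s Ω u = gagSq N s u - critInt N s u := by
  rw [nehariFun, MemHs.setIntegral_eq hp hu]

/-- Near the origin of `Ḣ^s` the critical integral is dominated by the squared seminorm. -/
theorem exists_critInt_le {N : ℕ} {s : ℝ} (hs0 : 0 < s) (hsN : 2 * s < N) :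
    ∃ ρ : ℝ, 0 < ρ ∧ ∀ (Ω : Set (Euc N)) (u : Euc N → ℝ), MemHs N s Ω u →
      gagSq N s u ≤ ρ → critInt N s u ≤ 1 / 2 * gagSq N s u := by
  have hp := two_lt_twoStar hs0 hsN
  obtain ⟨C, hC, hS⟩ := exists_sobolev_const (N := N) hs0 hsN
  have he : twoStar N s / 2 - 1 ≠ 0 := by linarith
  refine ⟨(1 / (2 * C)) ^ (1 / (twoStar N s / 2 - 1)) / C, by positivity,
    fun Ω u hu hle => ?_⟩
  rcases (gagSq_nonneg N s u).eq_or_lt with h0 | h0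
  · have := hS u hu.lp hu.fin
    rw [← h0, mul_zero, Real.zero_rpow (by linarith)] at this
    rw [← h0, mul_zero]
    exact this
  refine (hS u hu.lp hu.fin).trans ?_
  rw [le_div_iff₀ hC, mul_comm] at hle
  have hCg : 0 < C * gagSq N s u := by positivity
  have h1 := Real.rpow_le_rpow hCg.le hle (by linarith : 0 ≤ twoStar N s / 2 - 1)
  rw [← Real.rpow_mul (by positivity), one_div_mul_cancel he, Real.rpow_one,
    Real.rpow_sub_one hCg.ne', div_le_iff₀ hCg] at h1
  refine h1.trans_eq ?_
  field_simp

/-- Every admissible path crosses the Nehari manifold. -/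
theorem exists_nehari_on_path {N : ℕ} {s : ℝ} (hs0 : 0 < s) (hsN : 2 * s < N)
    {Ω : Set (Euc N)} {γ : ℝ → Euc N → ℝ}
    (hmem : ∀ t ∈ Set.Icc (0 : ℝ) 1, MemHs N s Ω (γ t))
    (hγ : ∀ t ∈ Set.Icc (0 : ℝ) 1, ∀ ε > (0 : ℝ), ∃ δ > (0 : ℝ), ∀ t' ∈ Set.Icc (0 : ℝ) 1,
      |t' - t| < δ → gagNorm N s (fun x => γ t' x - γ t x) < ε)
    (h0 : ∀ x : Euc N, γ 0 x = 0) (h1 : ¬ ∀ᵐ x : Euc N, γ 1 x = 0)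
    (hE : energy N s Ω (γ 1) ≤ 0) :
    ∃ t ∈ Set.Icc (0 : ℝ) 1, (¬ ∀ᵐ x : Euc N, γ t x = 0) ∧ nehariFun N s Ω (γ t) = 0 := by
  have hp := two_lt_twoStar hs0 hsN
  obtain ⟨ρ, hρ, hS⟩ := exists_critInt_le (N := N) hs0 hsN
  have hm1 := hmem 1 (by simp)
  have hcont : ContinuousOn
      (fun t => critInt N s (γ t) - max (gagSq N s (γ t)) ρ) (Set.Icc 0 1) :=
    (continuousOn_critInt hs0 hsN hmem hγ).sub
      ((continuousOn_gagSq hmem hγ).sup continuousOn_const)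
  have hstart : critInt N s (γ 0) - max (gagSq N s (γ 0)) ρ ≤ 0 := by
    have : critInt N s (γ 0) = 0 := by
      simp [critInt, h0, Real.zero_rpow (by linarith : twoStar N s ≠ 0)]
    linarith [le_max_right (gagSq N s (γ 0)) ρ]
  have hcrit : 0 < critInt N s (γ 1) :=
    (critInt_nonneg N s _).lt_of_ne' fun h => h1 ((MemHs.critInt_eq_zero_iff hp hm1).1 h)
  have hend : 0 ≤ critInt N s (γ 1) - max (gagSq N s (γ 1)) ρ := by
    rw [MemHs.energy_eq hp hm1] at hE
    have hlt : 1 / twoStar N s * critInt N s (γ 1) < 1 / 2 * critInt N s (γ 1) := by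
      gcongr
    by_cases hc : gagSq N s (γ 1) ≤ ρ
    · linarith [hS Ω _ hm1 hc, critInt_nonneg N s (γ 1)]
    · rw [max_eq_left (by linarith)]
      linarith
  obtain ⟨t, ht, hφ⟩ := intermediate_value_Icc zero_le_one hcont ⟨hstart, hend⟩
  have hmt := hmem t ht
  have hmax : critInt N s (γ t) = max (gagSq N s (γ t)) ρ := by
    simp only at hφ
    linarith
  refine ⟨t, ht, fun hz => ?_, ?_⟩
  · have := (MemHs.critInt_eq_zero_iff hp hmt).2 hz
    linarith [le_max_right (gagSq N s (γ t)) ρ]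
  · rw [MemHs.nehariFun_eq hp hmt, hmax]
    by_cases hc : gagSq N s (γ t) ≤ ρ
    · linarith [hS Ω _ hmt hc, le_max_right (gagSq N s (γ t)) ρ]
    · rw [max_eq_left (by linarith), sub_self]

theorem energy_le_on_ray {N : ℕ} {s : ℝ} (hp : 2 < twoStar N s) {Ω : Set (Euc N)}
    {u : Euc N → ℝ} (hu : MemHs N s Ω u) (hn : nehariFun N s Ω u = 0) {c : ℝ} (hc : 0 ≤ c) :
    energy N s Ω (fun x => c * u x) ≤ energy N s Ω u := by
  rw [MemHs.nehariFun_eq hp hu, sub_eq_zero] at hn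
  rw [(hu.const_mul c).energy_eq hp, hu.energy_eq hp, gagSq_const_mul, critInt_const_mul N s hc,
    ← hn]
  have hb := one_add_mul_self_le_rpow_one_add (s := c ^ 2 - 1) (by nlinarith [sq_nonneg c])
    (p := twoStar N s / 2) (by linarith)
  rw [add_sub_cancel, ← Real.rpow_two, ← Real.rpow_mul hc,
    mul_div_cancel₀ _ (two_ne_zero' ℝ), Real.rpow_two] at hb
  have hb' : 1 / 2 * (c ^ 2 - 1) ≤ 1 / twoStar N s * (c ^ twoStar N s - 1) := by
    rw [one_div_mul_eq_div (twoStar N s), le_div_iff₀ (by linarith)]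
    linarith
  nlinarith [mul_le_mul_of_nonneg_right hb' (gagSq_nonneg N s u)]

theorem exists_energy_nonpos_on_ray {N : ℕ} {s : ℝ} (hp : 2 < twoStar N s) {Ω : Set (Euc N)}
    {u : Euc N → ℝ} (hu : MemHs N s Ω u) (hn : nehariFun N s Ω u = 0) :
    ∃ T : ℝ, 0 < T ∧ energy N s Ω (fun x => T * u x) ≤ 0 := by
  rw [MemHs.nehariFun_eq hp hu, sub_eq_zero] at hn
  have hT : 0 < (twoStar N s / 2) ^ (1 / (twoStar N s - 2)) := by positivity
  refine ⟨_, hT, ?_⟩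
  rw [(hu.const_mul _).energy_eq hp, gagSq_const_mul, critInt_const_mul N s hT.le, ← hn]
  have hpow : ((twoStar N s / 2) ^ (1 / (twoStar N s - 2))) ^ twoStar N s =
      twoStar N s / 2 * ((twoStar N s / 2) ^ (1 / (twoStar N s - 2))) ^ 2 := by
    have hne : twoStar N s - 2 ≠ 0 := by linarith
    have hT2 : ((twoStar N s / 2) ^ (1 / (twoStar N s - 2))) ^ (twoStar N s - 2) =
        twoStar N s / 2 := by
      rw [← Real.rpow_mul (by positivity), one_div_mul_cancel hne, Real.rpow_one]
    rwa [Real.rpow_sub hT, Real.rpow_two, div_eq_iff (by positivity)] at hT2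
  rw [hpow]
  refine le_of_eq ?_
  have : twoStar N s ≠ 0 := by linarith
  field_simp
  ring

theorem sInf_eq_sInf_of_forall_exists_le {A B : Set ℝ} (hA : BddBelow A) (hB : BddBelow B)
    (hAB : ∀ a ∈ A, ∃ b ∈ B, b ≤ a) (hBA : ∀ b ∈ B, ∃ a ∈ A, a ≤ b) : sInf A = sInf B := by
  rcases A.eq_empty_or_nonempty with rfl | hne
  · rcases B.eq_empty_or_nonempty with rfl | ⟨b, hb⟩
    · rfl
    · obtain ⟨a, ha, -⟩ := hBA b hb
      exact ha.elim
  · obtain ⟨a, ha⟩ := hne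
    obtain ⟨b, hb, -⟩ := hAB a ha
    refine le_antisymm (le_csInf ⟨b, hb⟩ fun b hb => ?_) (le_csInf ⟨a, ha⟩ fun a ha => ?_)
    · obtain ⟨a, ha, h⟩ := hBA b hb
      exact (csInf_le hA ha).trans h
    · obtain ⟨b, hb, h⟩ := hAB a ha
      exact (csInf_le hB hb).trans h

/-- the mountain-pass value over paths in `Ḣ^s(Ω)^σ_G` equals the Nehari
value `m(Ω)^σ_G`. -/
theorem statement8 (N : ℕ) (s : ℝ) (hN : 2 ≤ N) (hs0 : 0 < s) (hs1 : s < 1)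
    (hsN : 2 * s < N)
    (G : Subgroup (ONgrp N)) (hGc : IsClosed (G : Set (ONgrp N)))
    (σ : G →* ℤˣ) (hσ : Continuous σ) (hσs : Function.Surjective σ) (hG2 : CondG2 G σ)
    (Ω : Set (Euc N)) (hΩ : IsOpen Ω) (hΩG : IsInvariantSet G Ω) :
    sInf {c : ℝ | ∃ γ : ℝ → Euc N → ℝ,
        (∀ t ∈ Set.Icc (0 : ℝ) 1, MemHs N s Ω (γ t) ∧ IsEquivariant G σ (γ t)) ∧
        (∀ t ∈ Set.Icc (0 : ℝ) 1, ∀ ε > (0 : ℝ), ∃ δ > (0 : ℝ), ∀ t' ∈ Set.Icc (0 : ℝ) 1,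
          |t' - t| < δ → gagNorm N s (fun x => γ t' x - γ t x) < ε) ∧
        (∀ x : Euc N, γ 0 x = 0) ∧
        ¬ (∀ᵐ x : Euc N, γ 1 x = 0) ∧
        energy N s Ω (γ 1) ≤ 0 ∧
        c = sSup ((fun t => energy N s Ω (γ t)) '' Set.Icc (0 : ℝ) 1)} =
      mval N s Ω G σ := by
  have hp := two_lt_twoStar hs0 hsN
  refine sInf_eq_sInf_of_forall_exists_le ⟨0, ?_⟩ ⟨0, ?_⟩ ?_ ?_
  · rintro c ⟨γ, -, -, h0, -, -, rfl⟩
    by_cases hb : BddAbove ((fun t => energy N s Ω (γ t)) '' Set.Icc (0 : ℝ) 1)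
    · refine le_csSup hb ⟨0, by simp, ?_⟩
      simp [energy, gagSq, h0, Real.zero_rpow (by linarith : twoStar N s ≠ 0)]
    · rw [Real.sSup_of_not_bddAbove hb]
  · rintro c ⟨u, hu, -, -, hn, rfl⟩
    rw [hu.nehariFun_eq hp, sub_eq_zero] at hn
    rw [hu.energy_eq hp, ← hn, ← sub_mul]
    refine mul_nonneg (sub_nonneg.2 ?_) (gagSq_nonneg N s u)
    gcongr
  · rintro c ⟨γ, hmem, hγ, h0, h1, hE, rfl⟩
    have hmem' : ∀ t ∈ Set.Icc (0 : ℝ) 1, MemHs N s Ω (γ t) := fun t ht => (hmem t ht).1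
    obtain ⟨t, ht, hnz, hn⟩ := exists_nehari_on_path hs0 hsN hmem' hγ h0 h1 hE
    refine ⟨_, ⟨γ t, (hmem t ht).1, (hmem t ht).2, hnz, hn, rfl⟩,
      le_csSup (isCompact_Icc.image_of_continuousOn ?_).bddAbove ⟨t, ht, rfl⟩⟩
    exact (((continuousOn_gagSq hmem' hγ).const_mul _).sub
      ((continuousOn_critInt hs0 hsN hmem' hγ).const_mul _)).congr
        fun t ht => (hmem' t ht).energy_eq hp
  · rintro c ⟨u, hu, hσu, hnz, hn, rfl⟩
    obtain ⟨T, hT, hTE⟩ := exists_energy_nonpos_on_ray hp hu hn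
    refine ⟨_, ⟨fun t x => t * T * u x, fun t _ => ⟨hu.const_mul _, hσu.const_mul _⟩,
      fun t _ ε hε => ?_, fun x => by ring, fun h => hnz ?_, by simpa using hTE, rfl⟩, ?_⟩
    · have hg := gagNorm_nonneg N s u
      refine ⟨ε / (T * gagNorm N s u + 1), by positivity, fun t' _ hd => ?_⟩
      have he : (fun x => t' * T * u x - t * T * u x) = fun x => ((t' - t) * T) * u x := by
        ext x; ring
      rw [he, gagNorm_const_mul, abs_mul, abs_of_pos hT]
      rw [lt_div_iff₀ (by positivity)] at hd
      nlinarith [abs_nonneg (t' - t)]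
    · filter_upwards [h] with x hx
      simpa [hT.ne'] using hx
    · refine csSup_le ((Set.nonempty_Icc.2 zero_le_one).image _) ?_
      rintro _ ⟨t, ht, rfl⟩
      exact energy_le_on_ray hp hu hn (mul_nonneg ht.1 hT.le)

end
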